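/- Suppose θ = G/4. Then the fundamental solutions of the Schied–Zhang market impact game with constant kernel G are the standard basis vectors: v = (1, 0, …, 0)ᵀ and w = (0, …, 0, 1)ᵀ in ℝ^{N+1}; consequently the directional trader's Nash-equilibrium schedule (X/2)(v + w) equals (X/2, 0, …, 0, X/2)ᵀ. -/

import Mathlib

open Matrix

/-!
For `θ = G / 4` the matrix `Γ_θ - Γ̃` has the entry `G` on and above the diagonal and `0` below it,
while `Γ_θ + Γ̃` is the transpose of that matrix plus the constant matrix `G`, a rank-one update
along its own first column that doubles the determinant. Both are therefore invertible, and the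
last column of the former is constantly `G`, the first column of the latter constantly `2 * G`.
An invertible matrix with a constant column maps a multiple of the corresponding basis vector to
the all-ones vector, so that basis vector is its fundamental solution.
-/

section FundamentalSolution

variable {ι R K : Type*} [Fintype ι] [DecidableEq ι] [CommRing R] [Field K]

/-- The solution of `M x = e`, with `e` the all-ones vector, normalised to have coordinate sum `1`:
the fundamental solution `M⁻¹ e / (eᵀ M⁻¹ e)` of the market impact game. It is meaningful only when
`M` is invertible and `eᵀ M⁻¹ e ≠ 0`. -/
noncomputable def fundamentalSolution (M : Matrix ι ι K) : ι → K :=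
  (1 ⬝ᵥ (M⁻¹ *ᵥ 1))⁻¹ • (M⁻¹ *ᵥ 1)

theorem fundamentalSolution_eq_single {M : Matrix ι ι K} (hM : IsUnit M.det) {k : ι} {a : K}
    (hcol : ∀ i, M i k = a) : fundamentalSolution M = Pi.single k 1 := by
  have ha : a ≠ 0 := by
    rintro rfl
    exact hM.ne_zero (det_eq_zero_of_column_eq_zero k hcol)
  have hsolves : M *ᵥ Pi.single k a⁻¹ = 1 := by
    ext i
    simp [hcol, ha]
  have hinv : M⁻¹ *ᵥ 1 = Pi.single k a⁻¹ := by
    rw [← hsolves, mulVec_mulVec, nonsing_inv_mul _ hM, one_mulVec]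
  rw [fundamentalSolution, hinv, dotProduct_single, ← Pi.single_smul]
  simp [ha]

theorem det_add_vecMulVec_mulVec (M : Matrix ι ι R) (x y : ι → R) :
    (M + vecMulVec (M *ᵥ x) y).det = M.det * (1 + y ⬝ᵥ x) := by
  rw [← mul_vecMulVec, ← mul_one_add, det_mul, vecMulVec_eq Unit,
    det_one_add_replicateCol_mul_replicateRow]

theorem det_add_vecMulVec_col_one (M : Matrix ι ι R) (k : ι) :
    (M + vecMulVec (M.col k) 1).det = 2 * M.det := by
  rw [← mulVec_single_one, det_add_vecMulVec_mulVec, dotProduct_single_one, Pi.one_apply]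
  ring

end FundamentalSolution

section UpperTriangularConst

variable {ι R K : Type*} [LinearOrder ι] [Field K]

/-- The upper triangular matrix all of whose entries on and above the diagonal are `a`; for
`a = G` it is the matrix `Γ_θ - Γ̃` of the critical game `θ = G / 4`. -/
def upperTriangularConst (ι : Type*) [LinearOrder ι] [Zero R] (a : R) : Matrix ι ι R :=
  of fun i j => if i ≤ j then a else 0

theorem upperTriangularConst_apply [Zero R] (a : R) (i j : ι) :
    upperTriangularConst ι a i j = if i ≤ j then a else 0 :=
  rfl

theorem det_upperTriangularConst [CommRing R] [Fintype ι] (a : R) :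
    (upperTriangularConst ι a).det = a ^ Fintype.card ι := by
  have hupper : (upperTriangularConst ι a).IsUpperTriangular := fun _ _ hij =>
    if_neg (not_le_of_gt hij)
  simp [det_of_isUpperTriangular hupper, upperTriangularConst_apply]

variable [Fintype ι]

theorem fundamentalSolution_upperTriangularConst [OrderTop ι] {G : K} (hG : G ≠ 0) :
    fundamentalSolution (upperTriangularConst ι G) = Pi.single ⊤ 1 := by
  refine fundamentalSolution_eq_single (a := G) ?_ fun i => if_pos le_top
  rw [det_upperTriangularConst]
  exact (pow_ne_zero _ hG).isUnit

theorem fundamentalSolution_transpose_upperTriangularConst_add [OrderBot ι]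
    [NeZero (2 : K)] {G : K} (hG : G ≠ 0) :
    fundamentalSolution ((upperTriangularConst ι G)ᵀ + of fun _ _ => G) = Pi.single ⊥ 1 := by
  have hrankOne : (of fun _ _ => G : Matrix ι ι K) =
      vecMulVec ((upperTriangularConst ι G)ᵀ.col ⊥) 1 := by
    ext i j
    simp [vecMulVec_apply, upperTriangularConst_apply]
  refine fundamentalSolution_eq_single (a := G + G) ?_ fun i => ?_
  · rw [hrankOne, det_add_vecMulVec_col_one, det_transpose, det_upperTriangularConst]
    exact (mul_ne_zero two_ne_zero (pow_ne_zero _ hG)).isUnit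
  · simp [upperTriangularConst_apply]

end UpperTriangularConst

theorem smul_single_bot_add_single_top_apply {ι R : Type*} [PartialOrder ι] [BoundedOrder ι]
    [Nontrivial ι] [DecidableEq ι] [Semiring R] (c : R) (i : ι) :
    (c • (Pi.single ⊥ 1 + Pi.single ⊤ 1 : ι → R)) i = if i = ⊥ ∨ i = ⊤ then c else 0 := by
  rcases eq_or_ne i ⊥ with rfl | hbot
  · simp
  · simp [hbot, Pi.single_apply]

theorem stmt_17_general {ι K : Type*} [Fintype ι] [LinearOrder ι] [BoundedOrder ι] [Nontrivial ι]
    [Field K] [NeZero (2 : K)] (G θ X : K) (hG : G ≠ 0) (hθ : θ = G / 4) (Γ Γθ Γt : Matrix ι ι K)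
    (hΓ : ∀ i j, Γ i j = G) (hΓθ : Γθ = Γ + (2 * θ) • (1 : Matrix ι ι K))
    (hΓt : ∀ i j, Γt i j = if j < i then G else if i = j then G / 2 else 0)
    (e : ι → K) (he : e = fun _ => 1) (v w : ι → K)
    (hv : v = (e ⬝ᵥ ((Γθ + Γt)⁻¹ *ᵥ e))⁻¹ • ((Γθ + Γt)⁻¹ *ᵥ e))
    (hw : w = (e ⬝ᵥ ((Γθ - Γt)⁻¹ *ᵥ e))⁻¹ • ((Γθ - Γt)⁻¹ *ᵥ e)) :
    v = Pi.single ⊥ 1 ∧ w = Pi.single ⊤ 1 ∧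
      ∀ i, ((X / 2) • (v + w)) i = if i = ⊥ ∨ i = ⊤ then X / 2 else 0 := by
  have hθ_half : 2 * θ = G / 2 := by
    rw [hθ, show (4 : K) = 2 * 2 by norm_num]
    field_simp
  have hadd : Γθ + Γt = (upperTriangularConst ι G)ᵀ + of fun _ _ => G := by
    ext i j
    rcases lt_trichotomy i j with hij | rfl | hij
    · simp [hΓθ, hΓ, hΓt, upperTriangularConst_apply, hij.ne, hij.not_gt, hij.not_ge]
    · simp [hΓθ, hΓ, hΓt, upperTriangularConst_apply, hθ_half, add_assoc]
    · simp [hΓθ, hΓ, hΓt, upperTriangularConst_apply, hij, hij.ne', hij.le]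
  have hsub : Γθ - Γt = upperTriangularConst ι G := by
    ext i j
    rcases lt_trichotomy i j with hij | rfl | hij
    · simp [hΓθ, hΓ, hΓt, upperTriangularConst_apply, hij.ne, hij.not_gt, hij.le]
    · simp [hΓθ, hΓ, hΓt, upperTriangularConst_apply, hθ_half]
    · simp [hΓθ, hΓ, hΓt, upperTriangularConst_apply, hij, hij.ne', hij.not_ge]
  subst he
  obtain rfl : v = Pi.single ⊥ 1 := by
    rw [hv, hadd]
    exact fundamentalSolution_transpose_upperTriangularConst_add hG
  obtain rfl : w = Pi.single ⊤ 1 := by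
    rw [hw, hsub]
    exact fundamentalSolution_upperTriangularConst hG
  exact ⟨rfl, rfl, smul_single_bot_add_single_top_apply (X / 2)⟩

/-- If `θ = G/4`, the fundamental solutions of the Schied–Zhang market impact game with
constant kernel `G` are the standard basis vectors `v = (1,0,…,0)ᵀ` and
`w = (0,…,0,1)ᵀ`, and consequently the directional trader's Nash-equilibrium schedule
`(X/2)(v + w)` equals `(X/2, 0, …, 0, X/2)ᵀ`. -/
theorem stmt_17 (N : ℕ) (hN : 1 ≤ N) (G θ X : ℝ) (hG : 0 < G) (hθ : θ = G/4)
    (Γ Γθ Γt : Matrix (Fin (N+1)) (Fin (N+1)) ℝ)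
    (hΓ : ∀ i j : Fin (N+1), Γ i j = G)
    (hΓθ : Γθ = Γ + (2*θ) • (1 : Matrix (Fin (N+1)) (Fin (N+1)) ℝ))
    (hΓt : ∀ i j : Fin (N+1), Γt i j = if j < i then G else if i = j then G/2 else 0)
    (e : Fin (N+1) → ℝ) (he : e = fun _ => 1)
    (v w : Fin (N+1) → ℝ)
    (hv : v = (e ⬝ᵥ ((Γθ + Γt)⁻¹ *ᵥ e))⁻¹ • ((Γθ + Γt)⁻¹ *ᵥ e))
    (hw : w = (e ⬝ᵥ ((Γθ - Γt)⁻¹ *ᵥ e))⁻¹ • ((Γθ - Γt)⁻¹ *ᵥ e)) :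
    v = Pi.single (0 : Fin (N+1)) 1 ∧
    w = Pi.single (Fin.last N) 1 ∧
    ∀ i : Fin (N+1),
      ((X/2) • (v + w)) i = if i.val = 0 ∨ i.val = N then X/2 else 0 := by
  have : Nontrivial (Fin (N + 1)) := Fin.nontrivial_iff_two_le.mpr (by omega)
  simpa only [Fin.ext_iff, bot_eq_zero, Fin.top_eq_last, Fin.val_zero, Fin.val_last] using
    stmt_17_general G θ X hG.ne' hθ Γ Γθ Γt hΓ hΓθ hΓt e he v w hv hw
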